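/- Let F be a field and let T : Fin p → Fin q → Fin r → F be an order-3 tensor with slices S_i = T(·,·,i) ∈ Mat_{p,q}(F). Fix k. For parameters a_1,…,a_k ∈ F^p, b_1,…,b_k ∈ F^q and λ_{i,j} ∈ F (1 ≤ i ≤ r, 1 ≤ j ≤ k), let E(a,b,λ) be the block-diagonal matrix diag( C_1, …, C_r, D_1, …, D_k ), where C_i = ( S_i , A , 0 ; 0 , I_k , −Λ_i ; Bᵀ , 0 , I_k ) with A the p×k matrix with columns a_1,…,a_k, B the q×k matrix with columns b_1,…,b_k, Λ_i = diag(λ_{i,1},…,λ_{i,k}), and where D_j ∈ F^{p+q} is the single-column matrix obtained by stacking a_j on top of b_j. Then for every choice of a, b, λ one has rank E(a,b,λ) ≥ 2kr + (tensor rank of T). -/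

import Mathlib

/-- The tensor rank of an order-3 tensor `T : Fin p → Fin q → Fin r → F`: the least `l`
such that `T` is a sum of `l` pure tensors. -/
noncomputable def tensorRank3 (F : Type*) [Field F] (p q r : ℕ)
    (T : Fin p → Fin q → Fin r → F) : ℕ :=
  sInf {l : ℕ | ∃ (a : Fin l → Fin p → F) (b : Fin l → Fin q → F) (c : Fin l → Fin r → F),
    ∀ i j k, T i j k = ∑ u : Fin l, a u i * b u j * c u k}

/-- The block matrix `C = ( S , A , 0 ; 0 , I_k , -Λ ; Bᵀ , 0 , I_k )`, where `A` has
columns `a_1, …, a_k`, `B` has columns `b_1, …, b_k` and `Λ = diag(λ_1, …, λ_k)`. -/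
def Cblock (F : Type*) [Field F] (p q k : ℕ) (S : Matrix (Fin p) (Fin q) F)
    (a : Fin k → Fin p → F) (b : Fin k → Fin q → F) (lam : Fin k → F) :
    Matrix (Fin p ⊕ (Fin k ⊕ Fin k)) (Fin q ⊕ (Fin k ⊕ Fin k)) F :=
  Matrix.fromBlocks S
    (Matrix.of fun i (j : Fin k ⊕ Fin k) => Sum.elim (fun j' => a j' i) (fun _ => (0 : F)) j)
    (Matrix.of fun (i : Fin k ⊕ Fin k) j => Sum.elim (fun _ => (0 : F)) (fun i' => b i' j) i)
    (Matrix.fromBlocks 1 (-(Matrix.diagonal lam)) 0 1)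

/-- The block-diagonal matrix `E(a,b,λ) = diag( C_1, …, C_r, D_1, …, D_k )`, where
`C_i = ( S_i , A , 0 ; 0 , I_k , -Λ_i ; Bᵀ , 0 , I_k )` is built from the `i`-th slice
`S_i` of `T` and `Λ_i = diag(λ_{i,1}, …, λ_{i,k})`, and where `D_j` is the single column
obtained by stacking `a_j` on top of `b_j`. -/
def Emat (F : Type*) [Field F] (p q r k : ℕ) (T : Fin p → Fin q → Fin r → F)
    (a : Fin k → Fin p → F) (b : Fin k → Fin q → F) (lam : Fin r → Fin k → F) :
    Matrix (((Fin p ⊕ (Fin k ⊕ Fin k)) × Fin r) ⊕ ((Fin p ⊕ Fin q) × Fin k))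
           (((Fin q ⊕ (Fin k ⊕ Fin k)) × Fin r) ⊕ (Unit × Fin k)) F :=
  Matrix.fromBlocks
    (Matrix.blockDiagonal fun i : Fin r =>
      Cblock F p q k (Matrix.of fun x y => T x y i) a b (lam i))
    0 0
    (Matrix.blockDiagonal fun j : Fin k =>
      Matrix.of fun (rj : Fin p ⊕ Fin q) (_ : Unit) => Sum.elim (a j) (b j) rj)

/-!
In each `C_i`, eliminating the invertible lower-right corner `( I_k , -Λ_i ; 0 , I_k )` leaves the
Schur complement `S_i - A Λ_i Bᵀ`, so `rank C_i = 2k + rank (S_i - A Λ_i Bᵀ)`. On the other hand `T`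
is the tensor with slices `S_i - A Λ_i Bᵀ`, plus `∑_j a_j ⊗ b_j ⊗ (λ_{1,j}, …, λ_{r,j})`. A tensor
`∑_s M_s ⊗ c_s` has tensor rank at most `∑_s rank M_s`, so
`tensor rank of T ≤ ∑_i rank (S_i - A Λ_i Bᵀ) + ∑_j rank (a_j b_jᵀ)`. Finally
`rank (a_j b_jᵀ) ≤ rank D_j`, since `a_j b_jᵀ` factors through the column `a_j`, a part of `D_j`.
-/

open Matrix

theorem transpose_mul_diagonal_mul_eq_sum_vecMulVec {R l m n : Type*} [CommSemiring R] [Fintype l]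
    [DecidableEq l] (a : l → m → R) (b : l → n → R) (d : l → R) :
    (of a)ᵀ * diagonal d * of b = ∑ j, d j • vecMulVec (a j) (b j) := by
  ext x y
  rw [mul_apply, Matrix.sum_apply]
  exact Finset.sum_congr rfl fun j _ => by
    simp [mul_diagonal, vecMulVec_apply, mul_left_comm, mul_assoc]

section MatrixRank

variable {R F l m n o : Type*} [Fintype l] [Fintype n]

theorem rank_mul_eq_card_of_inverses [CommSemiring R] [StrongRankCondition R] [Fintype m]
    [DecidableEq l] {U : Matrix m l R} {V : Matrix l n R} {L : Matrix l m R} {Q : Matrix n l R}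
    (hL : L * U = 1) (hQ : V * Q = 1) : (U * V).rank = Fintype.card l := by
  refine le_antisymm ((rank_mul_le_left U V).trans U.rank_le_card_width) ?_
  calc Fintype.card l = (L * (U * V) * Q).rank := by
        rw [← Matrix.mul_assoc, hL, Matrix.one_mul, hQ, rank_one]
    _ ≤ (L * (U * V)).rank := rank_mul_le_left _ _
    _ ≤ (U * V).rank := rank_mul_le_right _ _

theorem rank_vecMulVec_le_rank_replicateCol_sumElim [CommSemiring R] [StrongRankCondition R]
    {κ : Type*} (a : m → R) (d : κ → R) (b : n → R) :
    (vecMulVec a b).rank ≤ (replicateCol Unit (Sum.elim a d)).rank := by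
  rw [vecMulVec_eq Unit]
  exact (rank_mul_le_left _ _).trans
    (rank_submatrix_le (replicateCol Unit (Sum.elim a d)) Sum.inl id)

variable [Field F]

theorem exists_rank_factorization [Fintype m] (M : Matrix m n F) :
    ∃ (U : Matrix m (Fin M.rank) F) (V : Matrix (Fin M.rank) n F)
      (L : Matrix (Fin M.rank) m F) (Q : Matrix n (Fin M.rank) F),
      U * V = M ∧ L * U = 1 ∧ V * Q = 1 := by
  classical
  let f := toLin' M
  let e : LinearMap.range f ≃ₗ[F] (Fin M.rank → F) :=
    (Module.finBasis F (LinearMap.range f)).equivFun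
  let u := (LinearMap.range f).subtype ∘ₗ e.symm.toLinearMap
  let v := e.toLinearMap ∘ₗ f.rangeRestrict
  have huv : u ∘ₗ v = f := by ext; simp [u, v]
  obtain ⟨g, hg⟩ := u.exists_leftInverse_of_injective <| LinearMap.ker_eq_bot.mpr <|
    Subtype.val_injective.comp e.symm.injective
  obtain ⟨w, hw⟩ := v.exists_rightInverse_of_surjective <| LinearMap.range_eq_top.mpr <|
    e.surjective.comp f.surjective_rangeRestrict
  refine ⟨u.toMatrix', v.toMatrix', g.toMatrix', w.toMatrix', ?_, ?_, ?_⟩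
  · rw [← LinearMap.toMatrix'_comp, huv, LinearMap.toMatrix'_toLin']
  · rw [← LinearMap.toMatrix'_comp, hg, LinearMap.toMatrix'_id]
  · rw [← LinearMap.toMatrix'_comp, hw, LinearMap.toMatrix'_id]

theorem rank_fromBlocks_zero_zero {m' n' : Type*} [Finite m] [Finite m'] [Fintype n']
    (A : Matrix m n F) (D : Matrix m' n' F) :
    (fromBlocks A 0 0 D).rank = A.rank + D.rank := by
  cases nonempty_fintype m
  cases nonempty_fintype m'
  obtain ⟨U, V, L, Q, hA, hL, hQ⟩ := exists_rank_factorization A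
  obtain ⟨U', V', L', Q', hD, hL', hQ'⟩ := exists_rank_factorization D
  have hUV : fromBlocks U 0 0 U' * fromBlocks V 0 0 V' = fromBlocks A 0 0 D := by
    simp [fromBlocks_multiply, hA, hD]
  have hLU : fromBlocks L 0 0 L' * fromBlocks U 0 0 U' = 1 := by
    simp [fromBlocks_multiply, hL, hL']
  have hVQ : fromBlocks V 0 0 V' * fromBlocks Q 0 0 Q' = 1 := by
    simp [fromBlocks_multiply, hQ, hQ']
  rw [← hUV, rank_mul_eq_card_of_inverses hLU hVQ, Fintype.card_sum, Fintype.card_fin,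
    Fintype.card_fin]

theorem rank_blockDiagonal' [Fintype o] [DecidableEq o] {m' n' : o → Type*}
    [∀ i, Finite (m' i)] [∀ i, Fintype (n' i)] (M : ∀ i, Matrix (m' i) (n' i) F) :
    (blockDiagonal' M).rank = ∑ i, (M i).rank := by
  let (i : o) : Fintype (m' i) := Fintype.ofFinite (m' i)
  choose U V L Q hM hL hQ using fun i => exists_rank_factorization (M i)
  have hUV : blockDiagonal' U * blockDiagonal' V = blockDiagonal' M := by
    simp_rw [← blockDiagonal'_mul, hM]
  have hLU : blockDiagonal' L * blockDiagonal' U = 1 := by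
    simp_rw [← blockDiagonal'_mul, hL]
    exact blockDiagonal'_one
  have hVQ : blockDiagonal' V * blockDiagonal' Q = 1 := by
    simp_rw [← blockDiagonal'_mul, hQ]
    exact blockDiagonal'_one
  rw [← hUV, rank_mul_eq_card_of_inverses hLU hVQ, Fintype.card_sigma]
  simp_rw [Fintype.card_fin]

theorem rank_blockDiagonal [Finite m] [Fintype o] [DecidableEq o] (M : o → Matrix m n F) :
    (blockDiagonal M).rank = ∑ i, (M i).rank := by
  rw [← rank_blockDiagonal', ← blockDiagonal'_submatrix_eq_blockDiagonal]
  exact rank_submatrix (blockDiagonal' M)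
    ((Equiv.prodComm m o).trans (Equiv.sigmaEquivProd o m).symm)
    ((Equiv.prodComm n o).trans (Equiv.sigmaEquivProd o n).symm)

/-- Guttman's rank additivity formula. -/
theorem rank_fromBlocks_of_invertible₂₂ [Finite m] [DecidableEq l] (A : Matrix m n F)
    (B : Matrix m l F) (C : Matrix l n F) (D : Matrix l l F) [Invertible D] :
    (fromBlocks A B C D).rank = (A - B * ⅟D * C).rank + Fintype.card l := by
  classical
  cases nonempty_fintype m
  rw [fromBlocks_eq_of_invertible₂₂, rank_mul_eq_left_of_isUnit_det _ _ (by simp),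
    rank_mul_eq_right_of_isUnit_det _ _ (by simp), rank_fromBlocks_zero_zero,
    rank_of_isUnit D (isUnit_of_invertible D)]

end MatrixRank

section TensorRank

variable {F ι : Type*} [Field F] [Fintype ι] {p q r : ℕ}

theorem tensorRank3_le_card (T : Fin p → Fin q → Fin r → F) (a : ι → Fin p → F)
    (b : ι → Fin q → F) (c : ι → Fin r → F)
    (hT : ∀ x y z, T x y z = ∑ s, a s x * b s y * c s z) :
    tensorRank3 F p q r T ≤ Fintype.card ι := by
  let e := (Fintype.equivFin ι).symm
  refine Nat.sInf_le ⟨a ∘ e, b ∘ e, c ∘ e, fun x y z => ?_⟩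
  rw [hT]
  exact (e.sum_comp fun s => a s x * b s y * c s z).symm

theorem tensorRank3_le_sum_rank (T : Fin p → Fin q → Fin r → F)
    (M : ι → Matrix (Fin p) (Fin q) F) (c : ι → Fin r → F)
    (hT : ∀ x y z, T x y z = ∑ s, M s x y * c s z) :
    tensorRank3 F p q r T ≤ ∑ s, (M s).rank := by
  choose U V _ _ hUV _ _ using fun s => exists_rank_factorization (M s)
  have hcard : Fintype.card ((s : ι) × Fin (M s).rank) = ∑ s, (M s).rank := by simp
  rw [← hcard]
  refine tensorRank3_le_card T (fun s x => U s.1 x s.2) (fun s => V s.1 s.2) (fun s => c s.1)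
    fun x y z => ?_
  simp_rw [hT, Fintype.sum_sigma, ← Finset.sum_mul, ← mul_apply, hUV]

theorem tensorRank3_le_sum_rank_slice_sub (T : Fin p → Fin q → Fin r → F)
    (a : ι → Fin p → F) (b : ι → Fin q → F) (lam : Fin r → ι → F) :
    tensorRank3 F p q r T ≤
      ∑ i, (of (fun x y => T x y i) - ∑ j, lam i j • vecMulVec (a j) (b j)).rank +
        ∑ j, (vecMulVec (a j) (b j)).rank := by
  let S (i : Fin r) : Matrix (Fin p) (Fin q) F :=
    of (fun x y => T x y i) - ∑ j, lam i j • vecMulVec (a j) (b j)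
  have hT (x y z) : T x y z = ∑ i, S i x y * (Pi.single i 1 : Fin r → F) z +
      ∑ j, vecMulVec (a j) (b j) x y * lam z j := by
    simp [S, Pi.single_apply, Matrix.sum_apply, mul_comm]
  simpa using tensorRank3_le_sum_rank T (Sum.elim S fun j => vecMulVec (a j) (b j))
    (Sum.elim (fun i => Pi.single i 1) fun j z => lam z j) (by simpa using hT)

end TensorRank

theorem Cblock_eq_fromBlocks {F : Type*} [Field F] {p q k : ℕ} (S : Matrix (Fin p) (Fin q) F)
    (a : Fin k → Fin p → F) (b : Fin k → Fin q → F) (lam : Fin k → F) :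
    Cblock F p q k S a b lam =
      fromBlocks S (fromCols (of a)ᵀ 0) (fromRows 0 (of b)) (fromBlocks 1 (-diagonal lam) 0 1) := by
  ext (_ | _ | _) (_ | _ | _) <;> rfl

theorem rank_Cblock {F : Type*} [Field F] {p q k : ℕ} (S : Matrix (Fin p) (Fin q) F)
    (a : Fin k → Fin p → F) (b : Fin k → Fin q → F) (lam : Fin k → F) :
    (Cblock F p q k S a b lam).rank =
      (S - ∑ j, lam j • vecMulVec (a j) (b j)).rank + 2 * k := by
  let A : Matrix (Fin p) (Fin k ⊕ Fin k) F := fromCols (of a)ᵀ 0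
  let B : Matrix (Fin k ⊕ Fin k) (Fin q) F := fromRows 0 (of b)
  let D : Matrix (Fin k ⊕ Fin k) (Fin k ⊕ Fin k) F := fromBlocks 1 (-diagonal lam) 0 1
  let D' : Matrix (Fin k ⊕ Fin k) (Fin k ⊕ Fin k) F := fromBlocks 1 (diagonal lam) 0 1
  let : Invertible D := invertibleOfLeftInverse D D' <| by simp [D, D', fromBlocks_multiply]
  have hschur : A * D' * B = ∑ j, lam j • vecMulVec (a j) (b j) := by
    simp [A, B, D', fromCols_mul_fromBlocks, fromCols_mul_fromRows,
      transpose_mul_diagonal_mul_eq_sum_vecMulVec]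
  calc (Cblock F p q k S a b lam).rank
      = (S - A * D' * B).rank + Fintype.card (Fin k ⊕ Fin k) := by
        rw [Cblock_eq_fromBlocks]
        exact rank_fromBlocks_of_invertible₂₂ S A B D
    _ = (S - ∑ j, lam j • vecMulVec (a j) (b j)).rank + 2 * k := by
        rw [hschur, Fintype.card_sum, Fintype.card_fin, two_mul]

theorem rank_Emat {F : Type*} [Field F] {p q r k : ℕ} (T : Fin p → Fin q → Fin r → F)
    (a : Fin k → Fin p → F) (b : Fin k → Fin q → F) (lam : Fin r → Fin k → F) :
    (Emat F p q r k T a b lam).rank =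
      ∑ i, (Cblock F p q k (of fun x y => T x y i) a b (lam i)).rank +
        ∑ j, (replicateCol Unit (Sum.elim (a j) (b j))).rank := by
  rw [Emat, rank_fromBlocks_zero_zero, rank_blockDiagonal, rank_blockDiagonal]
  rfl

/-- For every choice of the parameters `a`, `b`, `λ`, the rank of the
block-diagonal matrix `E(a,b,λ) = diag( C_1, …, C_r, D_1, …, D_k )` is at least
`2kr` plus the tensor rank of `T`. -/
theorem rank_Emat_ge
    (F : Type*) [Field F] (p q r k : ℕ) (T : Fin p → Fin q → Fin r → F)
    (a : Fin k → Fin p → F) (b : Fin k → Fin q → F) (lam : Fin r → Fin k → F) :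
    2 * k * r + tensorRank3 F p q r T ≤ (Emat F p q r k T a b lam).rank := by
  let S (i : Fin r) : Matrix (Fin p) (Fin q) F :=
    of (fun x y => T x y i) - ∑ j, lam i j • vecMulVec (a j) (b j)
  calc 2 * k * r + tensorRank3 F p q r T
      ≤ 2 * k * r + (∑ i, (S i).rank + ∑ j, (vecMulVec (a j) (b j)).rank) := by
        gcongr
        exact tensorRank3_le_sum_rank_slice_sub T a b lam
    _ ≤ 2 * k * r + (∑ i, (S i).rank + ∑ j, (replicateCol Unit (Sum.elim (a j) (b j))).rank) := by
        gcongr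
        exact rank_vecMulVec_le_rank_replicateCol_sumElim _ _ _
    _ = ∑ i, ((S i).rank + 2 * k) + ∑ j, (replicateCol Unit (Sum.elim (a j) (b j))).rank := by
        rw [Finset.sum_add_distrib, Fin.sum_const, smul_eq_mul]
        ring
    _ = (Emat F p q r k T a b lam).rank := by
        simp_rw [rank_Emat, rank_Cblock, S]
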